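/- arXiv:1805.04337 — 2 statements merged into one kernel-verified Lean document; each statement's English description precedes it below -/
import Mathlib

section
/- Let K, q, c, l be positive integers with 0 ≤ l ≤ c−1. Suppose there exist functions x_0, …, x_{c−1} : {0,1}^K × {0,1}^K → Fin q, functions y_1, …, y_{c−l−1} : {0,1}^K → Fin q, and decoders D : (Fin q)^c → {0,1}^K and D' : (Fin q)^{c} → {0,1}^K such that for all w_1, w_2 ∈ {0,1}^K: D(x_0(w_1,w_2), …, x_{c−1}(w_1,w_2)) = w_2 and D'(x_0(w_1,w_2), …, x_l(w_1,w_2), y_1(w_1), …, y_{c−l−1}(w_1)) = w_1. Then q^{2c−l−1} ≥ 2^{2K}. -/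
section TwoStates

variable {V₁ V₂ X Y : Type*} {x : V₁ × V₂ → X} {y : V₁ × V₂ → Y} {D : X → V₂} {D' : X → Y → V₁}

theorem injective_prodMk_of_decoders (hD : ∀ w, D (x w) = w.2)
    (hD' : ∀ w, D' (x w) (y w) = w.1) : Function.Injective fun w => (x w, y w) :=
  Function.LeftInverse.injective (g := fun s => (D' s.1 s.2, D s.1)) fun w =>
    Prod.ext (hD' w) (hD w)

theorem two_state_argument_l_general [Fintype V₁] [Fintype V₂] [Fintype X] [Fintype Y]
    (hD : ∀ w, D (x w) = w.2) (hD' : ∀ w, D' (x w) (y w) = w.1) :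
    Fintype.card V₁ * Fintype.card V₂ ≤ Fintype.card X * Fintype.card Y := by
  simpa only [Fintype.card_prod] using
    Fintype.card_le_of_injective _ (injective_prodMk_of_decoders hD hD')

end TwoStates

/-- two-state argument for Theorem 4, case (b): suppose the later
version `w₂` is decodable by `D` from the `c` symbols `x_0(w₁,w₂), …, x_{c-1}(w₁,w₂)`,
and the earlier version `w₁` is decodable by `D'` from `x_0(w₁,w₂), …, x_l(w₁,w₂)`
together with `c-l-1` symbols `y_j(w₁)` depending only on `w₁`, all symbols taken
from an alphabet of size `q`. Then `q^(2c-l-1) ≥ 2^(2K)`, i.e.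
`(2c-l-1)·log₂ q ≥ 2K`. -/
theorem two_state_argument_l (K q c l : ℕ) (hK : 0 < K) (hq : 0 < q) (hc : 0 < c)
    (hl : l ≤ c - 1)
    (x : Fin c → (Fin K → Bool) × (Fin K → Bool) → Fin q)
    (y : Fin (c - l - 1) → (Fin K → Bool) → Fin q)
    (D : (Fin c → Fin q) → (Fin K → Bool))
    (D' : (Fin (l + 1) → Fin q) → (Fin (c - l - 1) → Fin q) → (Fin K → Bool))
    (hD : ∀ w₁ w₂ : Fin K → Bool, D (fun j => x j (w₁, w₂)) = w₂)
    (hD' : ∀ w₁ w₂ : Fin K → Bool,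
      D' (fun j => x (Fin.castLE (by omega) j) (w₁, w₂)) (fun j => y j w₁) = w₁) :
    2 ^ (2 * K) ≤ q ^ (2 * c - l - 1) := by
  have encoding_bound : 2 ^ K * 2 ^ K ≤ q ^ c * q ^ (c - l - 1) := by
    simpa only [Fintype.card_fun, Fintype.card_fin, Fintype.card_bool] using
      two_state_argument_l_general (x := fun w j => x j w) (y := fun w j => y j w.1)
        (D' := fun s => D' fun j => s (Fin.castLE (by omega) j))
        (fun w => hD w.1 w.2) (fun w => hD' w.1 w.2)
  have exponent_eq : 2 * c - l - 1 = c + (c - l - 1) := by omega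
  rwa [two_mul, exponent_eq, pow_add, pow_add]
end

section
/- Let ν = 2, c_R = c_W, and set c := 2c_W − n. Assume c ≥ 3, n ≥ ⌈7c/3⌉ + 4, that (n−c)/4 is an integer, and that h ≤ (n−c)/4. Then for every integer l with 0 ≤ l ≤ c−1 and 2c−l−2 ≤ (n+3c−4)/4, every (n, c_W, c_W, 2, h, 2^K, q) multi-version code with side information (for two independent K-bit versions) satisfies q^{l+1} ≥ 2^K or q^{2c−l−1} ≥ 2^{2K}; equivalently, log₂ q ≥ min{ K/(l+1) , 2K/(2c−l−1) }. -/
open Finset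

/-- The `h`-hop neighborhood `H_i = {i-h, …, i+h}` of server `i` on the ring `ZMod n`. -/
noncomputable def nbhd (n h : ℕ) (i : ZMod n) : Finset (ZMod n) :=
  (Finset.Icc (-(h : ℤ)) (h : ℤ)).image (fun d : ℤ => (i + (d : ZMod n)))

/-- The set `A_S(u)` of servers that received version `u` in state `S`. -/
def received (n ν : ℕ) [NeZero n] (S : ZMod n → Finset (Fin ν)) (u : Fin ν) :
    Finset (ZMod n) :=
  Finset.univ.filter (fun j => u ∈ S j)

/-- An `(n, c_W, c_R, ν, h, 2^K, q)` multi-version code with side information.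
Servers are indexed by `ZMod n`, versions by `Fin ν` (higher index = later version),
message values are `K`-bit strings `Fin K → Bool`, and stored symbols lie in `Fin q`.
The encoder of server `i` may depend only on the states of the servers in its
`h`-hop neighborhood and on the values of the versions that server `i` received;
the decoder for a set `T` of `c_R` servers may depend only on the symbols stored by
the servers of `T`, and must return the value of some version at least as late as the
latest complete version whenever a complete version exists (and `NULL`, i.e. `none`,
otherwise). -/
structure MVCode (n cW cR ν h K q : ℕ) [NeZero n] where
  enc : ZMod n → (ZMod n → Finset (Fin ν)) → (Fin ν → (Fin K → Bool)) → Fin q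
  dec : (ZMod n → Finset (Fin ν)) → Finset (ZMod n) → (ZMod n → Fin q) →
    Option (Fin K → Bool)
  enc_local_state : ∀ (i : ZMod n) (S S' : ZMod n → Finset (Fin ν))
      (W : Fin ν → Fin K → Bool),
    (∀ j ∈ nbhd n h i, S j = S' j) → enc i S W = enc i S' W
  enc_local_word : ∀ (i : ZMod n) (S : ZMod n → Finset (Fin ν))
      (W W' : Fin ν → Fin K → Bool),
    (∀ u ∈ S i, W u = W' u) → enc i S W = enc i S W'
  dec_local : ∀ (S : ZMod n → Finset (Fin ν)) (T : Finset (ZMod n))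
      (X X' : ZMod n → Fin q),
    (∀ j ∈ T, X j = X' j) → dec S T X = dec S T X'
  dec_correct : ∀ (S : ZMod n → Finset (Fin ν)) (W : Fin ν → Fin K → Bool)
      (T : Finset (ZMod n)), T.card = cR →
    (∃ u : Fin ν, cW ≤ (received n ν S u).card) →
    ∃ m : Fin ν, (∀ u : Fin ν, cW ≤ (received n ν S u).card → u ≤ m) ∧
      dec S T (fun j => enc j S W) = some (W m)
  dec_null : ∀ (S : ZMod n → Finset (Fin ν)) (W : Fin ν → Fin K → Bool)
      (T : Finset (ZMod n)), T.card = cR →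
    (∀ u : Fin ν, (received n ν S u).card < cW) →
    dec S T (fun j => enc j S W) = none

/-!
Choose three clusters of `t`, `t` and `c - 2t` servers, `t = ⌊c / 3⌋`, pairwise so far apart that no
cluster sees the state of another, inside a write set of `c_W` servers; together with the servers
outside the write set they form a read set. Let the new version miss no cluster, the first one, or
the first two. The three decoders then read partly the same symbols; the first must return the new
value, while the others choose, for every pair `(a, b)` of an old and a new value, one of `a`, `b`.

Counting the pairs according to these choices gives `N² ≤ y₁² y₂ y₃ + y₁ y₂² y₃ + N (y₃ - 1)`, where
`N = 2 ^ K` and `yᵢ` is the number of symbols of cluster `i`. This suffices if `c ≡ 2 [MOD 3]`.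
Otherwise the factor `2` lost here matters, and one counts only the pairs whose old value lies in a
set of `y₁ + 1` values with the same symbol in the first cluster, which exists as soon as
`y₁² < N`; for `c ≡ 0 [MOD 3]` this leaves only `N = y₁² + 1`, which is not a power of two. In all
cases `2 ^ (2K) ≤ q ^ ⌈4c / 3⌉`, and `max (2(l + 1)) (2c - l - 1)` is at least `⌈4c / 3⌉` for
every `l`.
-/

/-- A code on three server clusters for an old value `a` and a new value `b`, both in `V`. The
symbol of cluster `i` is `oldᵢ a` if it received only the old value and `newᵢ a b` if it received
both; cluster `3` always receives both. The decoder `decⱼ` is for the situation in which the first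
`j` clusters miss the new value: the new value is complete only for `j = 0`, hence for `j = 1, 2`
either value may be returned. -/
structure ClusterCode (V Y₁ Y₂ Y₃ : Type*) where
  old₁ : V → Y₁
  old₂ : V → Y₂
  new₁ : V → V → Y₁
  new₂ : V → V → Y₂
  new₃ : V → V → Y₃
  dec₀ : Y₁ → Y₂ → Y₃ → V
  dec₁ : Y₁ → Y₂ → Y₃ → V
  dec₂ : Y₁ → Y₂ → Y₃ → V
  dec₀_eq : ∀ a b, dec₀ (new₁ a b) (new₂ a b) (new₃ a b) = b
  dec₁_eq : ∀ a b, dec₁ (old₁ a) (new₂ a b) (new₃ a b) = a ∨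
    dec₁ (old₁ a) (new₂ a b) (new₃ a b) = b
  dec₂_eq : ∀ a b, dec₂ (old₁ a) (old₂ a) (new₃ a b) = a ∨
    dec₂ (old₁ a) (old₂ a) (new₃ a b) = b

namespace ClusterCode

variable {V Y₁ Y₂ Y₃ : Type*} (C : ClusterCode V Y₁ Y₂ Y₃)

/-- The value decoded from `(a, b)` when the first cluster misses the new value `b`. -/
def out₁ (a b : V) : V := C.dec₁ (C.old₁ a) (C.new₂ a b) (C.new₃ a b)

/-- The value decoded from `(a, b)` when the first two clusters miss the new value `b`. -/
def out₂ (a b : V) : V := C.dec₂ (C.old₁ a) (C.old₂ a) (C.new₃ a b)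

theorem out₁_eq_or (a b : V) : C.out₁ a b = a ∨ C.out₁ a b = b := C.dec₁_eq a b

theorem out₂_eq_or (a b : V) : C.out₂ a b = a ∨ C.out₂ a b = b := C.dec₂_eq a b

theorem out₁_self (a : V) : C.out₁ a a = a := (C.out₁_eq_or a a).elim id id

theorem out₂_self (a : V) : C.out₂ a a = a := (C.out₂_eq_or a a).elim id id

theorem new_value_eq {a b a' b' : V} (h₁ : C.new₁ a b = C.new₁ a' b')
    (h₂ : C.new₂ a b = C.new₂ a' b') (h₃ : C.new₃ a b = C.new₃ a' b') : b = b' := by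
  rw [← C.dec₀_eq a b, h₁, h₂, h₃, C.dec₀_eq]

theorem out₁_congr {a b a' b' : V} (h₁ : C.old₁ a = C.old₁ a')
    (h₂ : C.new₂ a b = C.new₂ a' b') (h₃ : C.new₃ a b = C.new₃ a' b') :
    C.out₁ a b = C.out₁ a' b' := by
  rw [out₁, h₁, h₂, h₃, out₁]

theorem out₂_congr {a b a' b' : V} (h₁ : C.old₁ a = C.old₁ a')
    (h₂ : C.old₂ a = C.old₂ a') (h₃ : C.new₃ a b = C.new₃ a' b') :
    C.out₂ a b = C.out₂ a' b' := by
  rw [out₂, h₁, h₂, h₃, out₂]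

section QuadraticBound

variable [Fintype V] [Fintype Y₃]

theorem card_out₂_eq_new_le [DecidableEq V] (a : V) :
    #{b | C.out₂ a b = b ∧ b ≠ a} ≤ Fintype.card Y₃ - 1 := by
  classical
  rw [← card_univ, ← card_erase_of_mem (mem_univ (C.new₃ a a))]
  refine card_le_card_of_injOn (C.new₃ a) ?_ ?_
  · rintro b hb
    simp only [coe_filter_univ, Set.mem_ofPred_eq] at hb
    refine mem_coe.2 (mem_erase.2 ⟨fun h ↦ ?_, mem_univ _⟩)
    exact hb.2 (by rw [← hb.1, C.out₂_congr rfl rfl h, C.out₂_self])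
  · rintro b hb b' hb' heq
    simp only [coe_filter_univ, Set.mem_ofPred_eq] at hb hb'
    rw [← hb.1, C.out₂_congr rfl rfl heq, hb'.1]

variable [Fintype Y₁] [Fintype Y₂]

theorem card_out₁_eq_old_le [DecidableEq V] :
    #{p : V × V | C.out₁ p.1 p.2 = p.1} ≤
      Fintype.card Y₁ * Fintype.card Y₁ * Fintype.card Y₂ * Fintype.card Y₃ := by
  suffices h : #{p : V × V | C.out₁ p.1 p.2 = p.1} ≤ #(univ : Finset (Y₁ × Y₁ × Y₂ × Y₃)) by
    simpa [mul_assoc] using h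
  refine card_le_card_of_injOn
    (fun p ↦ (C.old₁ p.1, C.new₁ p.1 p.2, C.new₂ p.1 p.2, C.new₃ p.1 p.2)) (by simp) ?_
  rintro ⟨a, b⟩ hp ⟨a', b'⟩ hp' heq
  simp only [coe_filter_univ, Set.mem_ofPred_eq, Prod.mk.injEq] at hp hp' heq
  obtain ⟨hold₁, hnew₁, hnew₂, hnew₃⟩ := heq
  rw [Prod.mk.injEq]
  exact ⟨hp.symm.trans ((C.out₁_congr hold₁ hnew₂ hnew₃).trans hp'),
    C.new_value_eq hnew₁ hnew₂ hnew₃⟩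

theorem card_out₁_eq_new_out₂_eq_old_le [DecidableEq V] :
    #{p : V × V | C.out₁ p.1 p.2 = p.2 ∧ C.out₂ p.1 p.2 = p.1} ≤
      Fintype.card Y₁ * Fintype.card Y₂ * Fintype.card Y₂ * Fintype.card Y₃ := by
  suffices h : #{p : V × V | C.out₁ p.1 p.2 = p.2 ∧ C.out₂ p.1 p.2 = p.1} ≤
      #(univ : Finset (Y₁ × Y₂ × Y₂ × Y₃)) by
    simpa [mul_assoc] using h
  refine card_le_card_of_injOn
    (fun p ↦ (C.old₁ p.1, C.old₂ p.1, C.new₂ p.1 p.2, C.new₃ p.1 p.2)) (by simp) ?_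
  rintro ⟨a, b⟩ hp ⟨a', b'⟩ hp' heq
  simp only [coe_filter_univ, Set.mem_ofPred_eq, Prod.mk.injEq] at hp hp' heq
  obtain ⟨hold₁, hold₂, hnew₂, hnew₃⟩ := heq
  rw [Prod.mk.injEq]
  exact ⟨hp.2.symm.trans ((C.out₂_congr hold₁ hold₂ hnew₃).trans hp'.2),
    hp.1.symm.trans ((C.out₁_congr hold₁ hnew₂ hnew₃).trans hp'.1)⟩

theorem card_mul_card_le (C : ClusterCode V Y₁ Y₂ Y₃) :
    Fintype.card V * Fintype.card V ≤
      Fintype.card Y₁ * Fintype.card Y₁ * Fintype.card Y₂ * Fintype.card Y₃ +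
        Fintype.card Y₁ * Fintype.card Y₂ * Fintype.card Y₂ * Fintype.card Y₃ +
        Fintype.card V * (Fintype.card Y₃ - 1) := by
  classical
  let E₁ : Finset (V × V) := {p | C.out₁ p.1 p.2 = p.1}
  let E₂ : Finset (V × V) := {p | C.out₁ p.1 p.2 = p.2 ∧ C.out₂ p.1 p.2 = p.1}
  let E₃ : Finset (Σ _ : V, V) := univ.sigma fun a ↦ {b | C.out₂ a b = b ∧ b ≠ a}
  have hE₃ : #E₃ ≤ Fintype.card V * (Fintype.card Y₃ - 1) := by
    rw [card_sigma, ← smul_eq_mul, ← card_univ]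
    exact sum_le_card_nsmul _ _ _ fun a _ ↦ C.card_out₂_eq_new_le a
  have hcover : univ ⊆ E₁ ∪ E₂ ∪ E₃.map (Equiv.sigmaEquivProd V V).toEmbedding := by
    rintro ⟨a, b⟩ -
    have h₁ := C.out₁_eq_or a b
    have h₂ := C.out₂_eq_or a b
    simp only [E₁, E₂, E₃, mem_union, mem_filter_univ, mem_map_equiv, mem_sigma, mem_univ,
      Equiv.sigmaEquivProd_symm_apply, true_and]
    grind
  calc Fintype.card V * Fintype.card V = #(univ : Finset (V × V)) := by simp
    _ ≤ #E₁ + #E₂ + #E₃ := by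
      refine (card_le_card hcover).trans <| (card_union_le _ _).trans ?_
      rw [card_map]
      exact Nat.add_le_add_right (card_union_le _ _) _
    _ ≤ _ := Nat.add_le_add (Nat.add_le_add C.card_out₁_eq_old_le
      C.card_out₁_eq_new_out₂_eq_old_le) hE₃

end QuadraticBound

section Pigeonhole

variable [DecidableEq V] {v : Y₁} {R : Finset V}

theorem card_column_le_of_mem {w : V} (hw : w ∈ R) : #{r ∈ R | C.out₁ r w ≠ r} ≤ #R - 1 := by
  rw [← card_erase_of_mem hw]
  refine card_le_card fun r hr ↦ ?_
  obtain ⟨hrR, hr⟩ := mem_filter.1 hr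
  exact mem_erase.2 ⟨fun h ↦ hr (h ▸ C.out₁_self r), hrR⟩

variable [Fintype Y₃]

/-- The values that `dec₂` can return when the first two clusters store `v` and `u`. -/
def candidates (v : Y₁) (u : Y₂) : Finset V :=
  univ.image (C.dec₂ v u)

theorem card_candidates_le (v : Y₁) (u : Y₂) :
    #(C.candidates v u) ≤ Fintype.card Y₃ :=
  card_image_le

theorem out₂_mem_candidates (a b : V) :
    C.out₂ a b ∈ C.candidates (C.old₁ a) (C.old₂ a) :=
  mem_image_of_mem _ (mem_univ _)

theorem self_mem_candidates (a : V) :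
    a ∈ C.candidates (C.old₁ a) (C.old₂ a) := by
  simpa only [C.out₂_self a] using C.out₂_mem_candidates a a

theorem out₂_eq_old_of_notMem_candidates {a w : V}
    (hw : w ∉ C.candidates (C.old₁ a) (C.old₂ a)) : C.out₂ a w = a :=
  (C.out₂_eq_or a w).resolve_right fun h ↦ hw (h ▸ C.out₂_mem_candidates a w)

theorem new₃_ne_of_notMem_candidates {a b w : V} (hab : a ≠ b)
    (h₁ : C.old₁ a = C.old₁ b) (h₂ : C.old₂ a = C.old₂ b)
    (hw : w ∉ C.candidates (C.old₁ a) (C.old₂ a)) : C.new₃ a w ≠ C.new₃ b w := fun h ↦ by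
  have ha := C.out₂_eq_old_of_notMem_candidates hw
  rw [h₁, h₂] at hw
  exact hab (by rw [← ha, C.out₂_congr h₁ h₂ h, C.out₂_eq_old_of_notMem_candidates hw])

theorem card_candidates_sdiff_add_two_le (hR : ∀ r ∈ R, C.old₁ r = v)
    {a b : V} (ha : a ∈ R) (hb : b ∈ R) (hab : a ≠ b) (hold₂ : C.old₂ a = C.old₂ b) :
    #(C.candidates v (C.old₂ a) \ R) + 2 ≤ Fintype.card Y₃ := by
  have ha' : a ∈ C.candidates v (C.old₂ a) := hR a ha ▸ C.self_mem_candidates a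
  have hb' : b ∈ C.candidates v (C.old₂ a) := hR b hb ▸ hold₂ ▸ C.self_mem_candidates b
  have hpair : 2 ≤ #(C.candidates v (C.old₂ a) ∩ R) :=
    one_lt_card.2 ⟨a, mem_inter.2 ⟨ha', ha⟩, b, mem_inter.2 ⟨hb', hb⟩, hab⟩
  have hsplit := card_sdiff_add_card_inter (C.candidates v (C.old₂ a)) R
  have hle := C.card_candidates_le v (C.old₂ a)
  omega

variable [Fintype Y₂]

/-- The pairs of symbols of the last two clusters from which `dec₁` returns `w` when the first
cluster stores `v`. -/
def fiber (v : Y₁) (w : V) : Finset (Y₂ × Y₃) :=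
  {y | C.dec₁ v y.1 y.2 = w}

theorem mem_fiber_out₁ (a b : V) :
    (C.new₂ a b, C.new₃ a b) ∈ C.fiber (C.old₁ a) (C.out₁ a b) :=
  (mem_filter_univ _).2 rfl

theorem mem_fiber_of_out₁_ne (hR : ∀ r ∈ R, C.old₁ r = v) {r w : V}
    (hr : r ∈ {r ∈ R | C.out₁ r w ≠ r}) : (C.new₂ r w, C.new₃ r w) ∈ C.fiber v w := by
  obtain ⟨hrR, hr⟩ := mem_filter.1 hr
  simpa only [hR r hrR, (C.out₁_eq_or r w).resolve_left hr] using C.mem_fiber_out₁ r w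

theorem sum_card_fiber [Fintype V] (v : Y₁) :
    ∑ w, #(C.fiber v w) = Fintype.card Y₂ * Fintype.card Y₃ := by
  rw [← Fintype.card_prod, ← card_univ]
  exact (card_eq_sum_card_fiberwise fun _ _ ↦ mem_coe.2 (mem_univ _)).symm

variable [Fintype Y₁]

theorem card_column_le (hR : ∀ r ∈ R, C.old₁ r = v) (hcard : #R = Fintype.card Y₁ + 1)
    {a b : V} (ha : a ∈ R) (hb : b ∈ R) (hab : a ≠ b) (hold₂ : C.old₂ a = C.old₂ b) (w : V) :
    #{r ∈ R | C.out₁ r w ≠ r} ≤ Fintype.card Y₁ * #(C.fiber v w) +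
      if w ∈ C.candidates v (C.old₂ a) then 1 else 0 := by
  set column : Finset V := {r ∈ R | C.out₁ r w ≠ r}
  have hcolumn : #column ≤ Fintype.card Y₁ + 1 := hcard ▸ card_le_card (filter_subset _ _)
  obtain hempty | ⟨r, hr⟩ := column.eq_empty_or_nonempty
  · simp [hempty]
  have hfiber : 1 ≤ #(C.fiber v w) := card_pos.2 ⟨_, C.mem_fiber_of_out₁_ne hR hr⟩
  split_ifs with hw
  · nlinarith
  obtain hsmall | hfull := Nat.lt_or_ge #column #R
  · nlinarith
  have hcolumn_eq : column = R := eq_of_subset_of_card_le (filter_subset _ _) hfull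
  have hold₁ : C.old₁ a = C.old₁ b := (hR a ha).trans (hR b hb).symm
  have hnew₃ : C.new₃ a w ≠ C.new₃ b w :=
    C.new₃_ne_of_notMem_candidates hab hold₁ hold₂ (by rwa [hR a ha])
  have htwo_fiber : 1 < #(C.fiber v w) :=
    one_lt_card.2 ⟨_, C.mem_fiber_of_out₁_ne hR (hcolumn_eq.symm ▸ ha : a ∈ column),
      _, C.mem_fiber_of_out₁_ne hR (hcolumn_eq.symm ▸ hb : b ∈ column),
      fun h ↦ hnew₃ (Prod.ext_iff.1 h).2⟩
  have hY₁ : 0 < Fintype.card Y₁ := Fintype.card_pos_iff.2 ⟨v⟩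
  nlinarith

variable [Fintype V]

theorem card_row_out₁_eq_old_le (a : V) :
    #{b | C.out₁ a b = a} ≤ Fintype.card Y₁ * #(C.fiber (C.old₁ a) a) := by
  rw [← card_univ, ← card_product]
  refine card_le_card_of_injOn (fun b ↦ (C.new₁ a b, C.new₂ a b, C.new₃ a b)) ?_ ?_
  · intro b hb
    have hb : C.out₁ a b = a := by simpa using hb
    have hfiber := C.mem_fiber_out₁ a b
    rw [hb] at hfiber
    simpa using hfiber
  · intro b _ b' _ heq
    simp only [Prod.mk.injEq] at heq
    exact C.new_value_eq heq.1 heq.2.1 heq.2.2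

theorem card_rows_mul_card_le (hR : ∀ r ∈ R, C.old₁ r = v) :
    #R * Fintype.card V ≤
      ∑ r ∈ R, Fintype.card Y₁ * #(C.fiber v r) + ∑ w, #{r ∈ R | C.out₁ r w ≠ r} := by
  calc #R * Fintype.card V = ∑ _w : V, #R := by simp [mul_comm]
    _ = ∑ w, #{r ∈ R | C.out₁ r w = r} + ∑ w, #{r ∈ R | C.out₁ r w ≠ r} := by
      simp only [← sum_add_distrib, ne_eq, card_filter_add_card_filter_not]
    _ = ∑ r ∈ R, #{w | C.out₁ r w = r} + ∑ w, #{r ∈ R | C.out₁ r w ≠ r} := by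
      congr 1
      exact (sum_card_bipartiteAbove_eq_sum_card_bipartiteBelow fun r w ↦ C.out₁ r w = r).symm
    _ ≤ _ := by
      gcongr with r hr
      exact hR r hr ▸ C.card_row_out₁_eq_old_le r

theorem sum_card_column_le (hR : ∀ r ∈ R, C.old₁ r = v) (hcard : #R = Fintype.card Y₁ + 1)
    {a b : V} (ha : a ∈ R) (hb : b ∈ R) (hab : a ≠ b) (hold₂ : C.old₂ a = C.old₂ b) :
    ∑ w, #{r ∈ R | C.out₁ r w ≠ r} ≤ #R * Fintype.card Y₁ +
      (∑ w ∈ Rᶜ, Fintype.card Y₁ * #(C.fiber v w) + #(C.candidates v (C.old₂ a) \ R)) := by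
  rw [← sum_add_sum_compl R]
  refine Nat.add_le_add ?_ ?_
  · rw [← smul_eq_mul]
    refine sum_le_card_nsmul _ _ _ fun w hw ↦ (C.card_column_le_of_mem hw).trans ?_
    rw [hcard, Nat.add_sub_cancel]
  · refine (sum_le_sum fun w _ ↦ C.card_column_le hR hcard ha hb hab hold₂ w).trans_eq ?_
    rw [sum_add_distrib, sum_boole, Nat.cast_id, filter_mem_eq_inter, inter_comm,
      sdiff_eq_inter_compl]

end Pigeonhole

/- Among the `y₁ + 1` old values of `R`, all with symbol `v` in the first cluster, two share their
symbol in the second cluster as well, so the last cluster has to tell them apart. -/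
theorem add_one_mul_card_add_two_le [Fintype V] [Fintype Y₁] [Fintype Y₂] [Fintype Y₃]
    (C : ClusterCode V Y₁ Y₂ Y₃) (h₂₁ : Fintype.card Y₂ ≤ Fintype.card Y₁)
    (hV : Fintype.card Y₁ * Fintype.card Y₁ < Fintype.card V) :
    (Fintype.card Y₁ + 1) * Fintype.card V + 2 ≤
      Fintype.card Y₁ * (Fintype.card Y₂ * Fintype.card Y₃) +
        (Fintype.card Y₁ + 1) * Fintype.card Y₁ + Fintype.card Y₃ := by
  classical
  obtain ⟨v, hv⟩ := Fintype.exists_lt_card_fiber_of_mul_lt_card C.old₁ hV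
  obtain ⟨R, hRv, (hcard : #R = Fintype.card Y₁ + 1)⟩ :=
    exists_subset_card_eq (Nat.succ_le_of_lt hv)
  have hR : ∀ r ∈ R, C.old₁ r = v := fun r hr ↦ by simpa using hRv hr
  obtain ⟨a, ha, b, hb, hab, hold₂⟩ := exists_ne_map_eq_of_card_lt_of_maps_to
    (s := R) (t := univ) (f := C.old₂) (by rw [card_univ, hcard]; omega)
    (fun _ _ ↦ mem_coe.2 (mem_univ _))
  have hrows := C.card_rows_mul_card_le hR
  have hcolumns := C.sum_card_column_le hR hcard ha hb hab hold₂
  have hcandidates := C.card_candidates_sdiff_add_two_le hR ha hb hab hold₂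
  have hfibers : ∑ r ∈ R, Fintype.card Y₁ * #(C.fiber v r) +
      ∑ w ∈ Rᶜ, Fintype.card Y₁ * #(C.fiber v w) =
      Fintype.card Y₁ * (Fintype.card Y₂ * Fintype.card Y₃) := by
    rw [sum_add_sum_compl, ← mul_sum, sum_card_fiber]
  rw [hcard] at hrows hcolumns
  omega

variable [Fintype V] [Fintype Y₁] [Fintype Y₂] [Fintype Y₃]

theorem card_le_mul_sq (C : ClusterCode V Y₁ Y₂ Y₃) {M e : ℕ} (he : 2 ≤ e)
    (hY₁ : Fintype.card Y₁ = M) (hY₂ : Fintype.card Y₂ = M) (hY₃ : Fintype.card Y₃ = M * e) :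
    Fintype.card V ≤ e * M ^ 2 := by
  by_contra! hV
  have hbound := C.add_one_mul_card_add_two_le (by omega) (by rw [hY₁]; nlinarith)
  rw [hY₁, hY₂, hY₃] at hbound
  have hlower := Nat.mul_le_mul_left (M + 1) (Nat.succ_le_of_lt hV)
  have hsum : e * M ^ 2 + 3 ≤ M ^ 2 + e * M := by linarith
  obtain hM | hM := Nat.lt_or_ge M 2
  · interval_cases M <;> omega
  obtain ⟨d, rfl⟩ := Nat.exists_eq_add_of_le he
  nlinarith

theorem card_le_sq_or_eq_sq_add_one (C : ClusterCode V Y₁ Y₂ Y₃) {M : ℕ}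
    (hY₁ : Fintype.card Y₁ = M) (hY₂ : Fintype.card Y₂ = M) (hY₃ : Fintype.card Y₃ = M) :
    Fintype.card V ≤ M ^ 2 ∨ Fintype.card V = M ^ 2 + 1 ∧ 2 < M := by
  by_contra! h
  obtain ⟨hV, hne⟩ := h
  have hbound := C.add_one_mul_card_add_two_le (by omega) (by rw [hY₁]; nlinarith)
  rw [hY₁, hY₂, hY₃] at hbound
  obtain heq | hV' : Fintype.card V = M ^ 2 + 1 ∨ M ^ 2 + 2 ≤ Fintype.card V := by omega
  · rw [heq] at hbound
    exact absurd (hne heq) (by nlinarith)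
  · have hlower := Nat.mul_le_mul_left (M + 1) hV'
    nlinarith

end ClusterCode

theorem two_pow_ne_sq_add_one {M : ℕ} (hM : 2 ≤ M) (K : ℕ) : 2 ^ K ≠ M ^ 2 + 1 := by
  intro h
  have hK : 2 < K := by
    rw [← Nat.pow_lt_pow_iff_right one_lt_two, h]
    nlinarith
  have hdvd : 4 ∣ M ^ 2 + 1 := h ▸ pow_dvd_pow 2 hK.le
  obtain ⟨k, rfl | rfl⟩ := Nat.even_or_odd' M <;> ring_nf at hdvd <;> omega

theorem sub_two_mul_sq_lt_pow_three {N M q : ℕ} (hq : 2 ≤ q)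
    (hquad : N * N + N ≤ 2 * (M ^ 4 * q ^ 2) + N * (M * q ^ 2))
    (hlarge : M ^ 4 * q ^ 3 < N ^ 2) : ((q - 2) * M) ^ 2 < q ^ 3 := by
  obtain ⟨p, rfl⟩ := Nat.exists_eq_add_of_le' hq
  rw [Nat.add_sub_cancel]
  have hlinear : p * N < M * (p + 2) ^ 3 := by
    have hN : 0 < N := by
      rw [Nat.pos_iff_ne_zero]
      rintro rfl
      simp at hlarge
    have hscaled := Nat.mul_le_mul_left (p + 2) hquad
    refine Nat.lt_of_mul_lt_mul_left (a := N) ?_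
    nlinarith
  by_contra! hge
  have hsq : (p * N) ^ 2 < (M * (p + 2) ^ 3) ^ 2 := Nat.pow_lt_pow_left hlinear two_ne_zero
  refine hsq.not_ge ?_
  calc (M * (p + 2) ^ 3) ^ 2 = M ^ 2 * (p + 2) ^ 3 * (p + 2) ^ 3 := by ring
    _ ≤ M ^ 2 * (p + 2) ^ 3 * (p * M) ^ 2 := Nat.mul_le_mul_left _ hge
    _ = p ^ 2 * (M ^ 4 * (p + 2) ^ 3) := by ring
    _ ≤ p ^ 2 * N ^ 2 := Nat.mul_le_mul_left _ hlarge.le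
    _ = (p * N) ^ 2 := by ring

theorem eq_two_or_eq_three_of_quadratic {N M q : ℕ} (hq : 2 ≤ q) (hqM : q ≤ M)
    (hquad : N * N + N ≤ 2 * (M ^ 4 * q ^ 2) + N * (M * q ^ 2))
    (hlarge : M ^ 4 * q ^ 3 < N ^ 2) : q = 2 ∨ q = 3 ∧ M < 6 := by
  have hlt := sub_two_mul_sq_lt_pow_three hq hquad hlarge
  obtain rfl | rfl | hq4 : q = 2 ∨ q = 3 ∨ 4 ≤ q := by omega
  · exact .inl rfl
  · exact .inr ⟨rfl, by nlinarith⟩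
  · refine absurd hlt (not_lt.2 ?_)
    obtain ⟨p, rfl⟩ := Nat.exists_eq_add_of_le' hq4
    calc (p + 4) ^ 3
      _ ≤ ((p + 2) * (p + 4)) ^ 2 := by nlinarith [Nat.zero_le (p ^ 4), Nat.zero_le (p ^ 3)]
      _ ≤ ((p + 4 - 2) * M) ^ 2 := by gcongr; omega

theorem two_pow_sq_le_of_quadratic {K q t : ℕ} (ht : 1 ≤ t) (hq : 2 ≤ q)
    (hquad : 2 ^ K * 2 ^ K + 2 ^ K ≤
      2 * ((q ^ t) ^ 4 * q ^ 2) + 2 ^ K * (q ^ t * q ^ 2)) :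
    2 ^ (2 * K) ≤ q ^ (4 * t + 3) := by
  by_contra! hlt
  have hlarge : (q ^ t) ^ 4 * q ^ 3 < (2 ^ K) ^ 2 := by
    rwa [← pow_mul, ← pow_mul, ← pow_add, mul_comm t, mul_comm K]
  have hqM : q ≤ q ^ t := Nat.le_self_pow (by omega) q
  obtain rfl | ⟨rfl, hM⟩ := eq_two_or_eq_three_of_quadratic hq hqM hquad hlarge
  · have hK : 2 * t + 2 ≤ K := by
      have := (Nat.pow_lt_pow_iff_right one_lt_two).1 hlt
      omega
    have hN : 4 * (2 ^ t) ^ 2 ≤ 2 ^ K := by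
      calc 4 * (2 ^ t) ^ 2 = 2 ^ (2 * t + 2) := by ring
        _ ≤ 2 ^ K := Nat.pow_le_pow_right two_pos hK
    have hquartic : (4 * (2 ^ t) ^ 2) ^ 2 ≤ (2 ^ K) ^ 2 := Nat.pow_le_pow_left hN 2
    have hcross : 2 ^ K * (8 * 2 ^ t) ≤ 2 ^ K * 2 ^ K := Nat.mul_le_mul_left _ (by nlinarith)
    have hpos : 0 < 2 ^ K := by positivity
    nlinarith
  · have htwo : t < 2 := by
      rw [← Nat.pow_lt_pow_iff_right (by norm_num : 1 < 3)]
      omega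
    obtain rfl : t = 1 := by omega
    have hK : 6 ≤ K := by
      by_contra! hK
      have : 2 ^ (2 * K) ≤ 2 ^ 10 := Nat.pow_le_pow_right two_pos (by omega)
      omega
    have hN : 2 ^ 6 ≤ 2 ^ K := Nat.pow_le_pow_right two_pos hK
    nlinarith

theorem ClusterCode.two_pow_two_mul_le {V Y₁ Y₂ Y₃ : Type*} [Fintype V] [Fintype Y₁] [Fintype Y₂]
    [Fintype Y₃] (C : ClusterCode V Y₁ Y₂ Y₃) {K q t r : ℕ} (hq : 0 < q) (ht : 1 ≤ t) (hr : r < 3)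
    (hV : Fintype.card V = 2 ^ K) (hY₁ : Fintype.card Y₁ = q ^ t) (hY₂ : Fintype.card Y₂ = q ^ t)
    (hY₃ : Fintype.card Y₃ = q ^ (t + r)) : 2 ^ (2 * K) ≤ q ^ (4 * t + (4 * r + 2) / 3) := by
  obtain rfl | hq : q = 1 ∨ 2 ≤ q := by omega
  · rw [one_pow] at hY₁ hY₂ hY₃ ⊢
    have hle : 2 ^ K ≤ 1 := by simpa [hV] using C.card_le_sq_or_eq_sq_add_one hY₁ hY₂ hY₃
    simpa [pow_mul'] using Nat.pow_le_pow_left hle 2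
  interval_cases r
  · obtain hle | ⟨heq, hM⟩ := C.card_le_sq_or_eq_sq_add_one hY₁ hY₂ hY₃
    · rw [hV] at hle
      calc 2 ^ (2 * K) = (2 ^ K) ^ 2 := by ring
        _ ≤ ((q ^ t) ^ 2) ^ 2 := Nat.pow_le_pow_left hle 2
        _ = q ^ (4 * t + 0) := by ring
    · exact absurd (hV.symm.trans heq) (two_pow_ne_sq_add_one hM.le K)
  · have hle := C.card_le_mul_sq hq hY₁ hY₂ (hY₃.trans (pow_succ q t))
    rw [hV] at hle
    calc 2 ^ (2 * K) = (2 ^ K) ^ 2 := by ring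
      _ ≤ (q * (q ^ t) ^ 2) ^ 2 := Nat.pow_le_pow_left hle 2
      _ = q ^ (4 * t + 2) := by ring
  · refine two_pow_sq_le_of_quadratic ht hq ?_
    have hquad := C.card_mul_card_le
    rw [hV, hY₁, hY₂, hY₃, pow_add, Nat.mul_sub_one] at hquad
    have hle : 2 ^ K ≤ 2 ^ K * (q ^ t * q ^ 2) := Nat.le_mul_of_pos_right _ (by positivity)
    have hquad_add := Nat.add_le_add_right hquad (2 ^ K)
    rw [add_assoc, Nat.sub_add_cancel hle] at hquad_add
    linarith

theorem mem_nbhd {n h : ℕ} {i j : ZMod n} :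
    j ∈ nbhd n h i ↔ ∃ d : ℤ, |d| ≤ h ∧ i + d = j := by
  simp [nbhd, abs_le]

/-- No server of `P` has a server of `Q` in its `h`-hop neighborhood, so that what a server of `P`
stores does not depend on the state of `Q`. -/
def Separated {n : ℕ} (h : ℕ) (P Q : Finset (ZMod n)) : Prop :=
  ∀ i ∈ P, ∀ j ∈ nbhd n h i, j ∉ Q

theorem Separated.symm {n h : ℕ} {P Q : Finset (ZMod n)} (hPQ : Separated h P Q) :
    Separated h Q P := by
  intro j hj i hi hiP
  obtain ⟨d, hd, rfl⟩ := mem_nbhd.1 hi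
  exact hPQ _ hiP j (mem_nbhd.2 ⟨-d, by rwa [abs_neg], by simp⟩) hj

theorem Separated.union_right {n h : ℕ} {P Q Q' : Finset (ZMod n)} (hQ : Separated h P Q)
    (hQ' : Separated h P Q') : Separated h P (Q ∪ Q') :=
  fun i hi j hj ↦ notMem_union.2 ⟨hQ i hi j hj, hQ' i hi j hj⟩

theorem separated_empty {n h : ℕ} {P : Finset (ZMod n)} : Separated h P ∅ :=
  fun _ _ j _ ↦ notMem_empty j

/-- The servers `a, a + 1, …, b - 1` of the ring, for `a ≤ b ≤ n`. -/
def arc (n a b : ℕ) [NeZero n] : Finset (ZMod n) := {j | a ≤ j.val ∧ j.val < b}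

section Arc

variable {n : ℕ} [NeZero n]

theorem mem_arc {a b : ℕ} {j : ZMod n} : j ∈ arc n a b ↔ a ≤ j.val ∧ j.val < b :=
  mem_filter_univ j

theorem card_arc {a b : ℕ} (hb : b ≤ n) : #(arc n a b) = b - a := by
  rw [← Nat.card_Ico, ← card_map ⟨ZMod.val, ZMod.val_injective n⟩]
  congr 1
  ext m
  simp only [mem_map, mem_arc, Function.Embedding.coeFn_mk, mem_Ico]
  refine ⟨fun ⟨_, hj, hjm⟩ ↦ hjm ▸ hj, fun hm ↦ ?_⟩
  have hval : (m : ZMod n).val = m := ZMod.val_cast_of_lt (by omega)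
  exact ⟨m, by rwa [hval], hval⟩

theorem arc_subset_arc {a b a' b' : ℕ} (ha : a' ≤ a) (hb : b ≤ b') : arc n a b ⊆ arc n a' b' :=
  fun _ hj ↦ by rw [mem_arc] at hj ⊢; omega

theorem disjoint_arc {a b a' b' : ℕ} (h : b ≤ a') : Disjoint (arc n a b) (arc n a' b') :=
  disjoint_left.2 fun _ hj hj' ↦ by rw [mem_arc] at hj hj'; omega

theorem separated_arc {h a b a' b' : ℕ} (hright : b + h ≤ a') (hleft : b' + h ≤ n + a) :
    Separated h (arc n a b) (arc n a' b') := by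
  intro i hi j hj hj'
  obtain ⟨d, hd, hij⟩ := mem_nbhd.1 hj
  rw [mem_arc] at hi hj'
  have hdvd : (n : ℤ) ∣ j.val - (i.val + d) := by
    rw [← ZMod.intCast_eq_intCast_iff_dvd_sub]
    simpa using hij
  have hpos : 0 < (j.val : ℤ) - (i.val + d) := by have := le_of_abs_le hd; omega
  have hn := Int.le_of_dvd hpos hdvd
  have := neg_le_of_abs_le hd
  omega

end Arc

/-- The state in which the servers of `U` have received version `0` and, except for those of `D`,
also version `1`, while the other servers have received nothing. -/
def staleState {n : ℕ} (U D : Finset (ZMod n)) : ZMod n → Finset (Fin 2) :=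
  fun i ↦ if i ∈ U then if i ∈ D then {0} else univ else ∅

theorem received_staleState_zero {n : ℕ} [NeZero n] (U D : Finset (ZMod n)) :
    received n 2 (staleState U D) 0 = U := by
  ext i
  rw [received, mem_filter_univ, staleState]
  split_ifs <;> simp [*]

theorem received_staleState_empty_one {n : ℕ} [NeZero n] (U : Finset (ZMod n)) :
    received n 2 (staleState U ∅) 1 = U := by
  ext i
  rw [received, mem_filter_univ, staleState, if_neg (notMem_empty i)]
  split_ifs <;> simp [*]

namespace MVCode

variable {n cW cR h K q : ℕ} [NeZero n] (code : MVCode n cW cR 2 h K q)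
  {U D D' P P₁ P₂ P₃ : Finset (ZMod n)}

theorem enc_staleState_congr {i : ZMod n} (hD : ∀ j ∈ nbhd n h i, (j ∈ D ↔ j ∈ D'))
    (W : Fin 2 → Fin K → Bool) :
    code.enc i (staleState U D) W = code.enc i (staleState U D') W :=
  code.enc_local_state i _ _ W fun j hj ↦ by simp only [staleState, hD j hj]

theorem enc_staleState_of_mem {i : ZMod n} (hi : i ∈ D) {W W' : Fin 2 → Fin K → Bool}
    (hW : W 0 = W' 0) :
    code.enc i (staleState U D) W = code.enc i (staleState U D) W' := by
  refine code.enc_local_word i _ W W' fun u hu ↦ ?_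
  obtain rfl : u = 0 := by
    simp only [staleState, hi, if_true] at hu
    split_ifs at hu
    · exact mem_singleton.1 hu
    · simp at hu
  exact hW

theorem enc_staleState_of_notMem {i : ZMod n} (hi : i ∉ U) (W W' : Fin 2 → Fin K → Bool) :
    code.enc i (staleState U D) W = code.enc i (staleState U D) W' :=
  code.enc_local_word i _ W W' fun u hu ↦ by simp [staleState, hi] at hu

/-- The value decoded in the state `staleState U D` from the symbols of the clusters `P₁`, `P₂`,
`P₃` and of the servers outside `U`; the latter received nothing, so their symbols are constants. -/
def decodeStale (U D : Finset (ZMod n)) (y₁ : P₁ → Fin q) (y₂ : P₂ → Fin q) (y₃ : P₃ → Fin q) :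
    Fin K → Bool :=
  (code.dec (staleState U D) (P₁ ∪ P₂ ∪ P₃ ∪ Uᶜ) fun j ↦
    if h₁ : j ∈ P₁ then y₁ ⟨j, h₁⟩
    else if h₂ : j ∈ P₂ then y₂ ⟨j, h₂⟩
    else if h₃ : j ∈ P₃ then y₃ ⟨j, h₃⟩
    else code.enc j (staleState U D) default).getD default

theorem decodeStale_eq {W : Fin 2 → Fin K → Bool} {y₁ : P₁ → Fin q} {y₂ : P₂ → Fin q}
    {y₃ : P₃ → Fin q} (h₁ : ∀ j, y₁ j = code.enc j (staleState U D) W)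
    (h₂ : ∀ j, y₂ j = code.enc j (staleState U D) W)
    (h₃ : ∀ j, y₃ j = code.enc j (staleState U D) W) :
    code.decodeStale U D y₁ y₂ y₃ = (code.dec (staleState U D) (P₁ ∪ P₂ ∪ P₃ ∪ Uᶜ)
      fun j ↦ code.enc j (staleState U D) W).getD default := by
  rw [decodeStale, code.dec_local _ _ _ fun j ↦ code.enc j (staleState U D) W]
  intro j hj
  simp only [h₁, h₂, h₃, dite_eq_ite]
  split_ifs with hj₁ hj₂ hj₃
  iterate 3 rfl
  exact code.enc_staleState_of_notMem (by simpa [hj₁, hj₂, hj₃] using hj) _ _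

theorem dec_staleState_eq_or {T : Finset (ZMod n)} (hU : cW ≤ #U) (hT : #T = cR)
    (D : Finset (ZMod n)) (a b : Fin K → Bool) :
    (code.dec (staleState U D) T fun j ↦ code.enc j (staleState U D) ![a, b]).getD default = a ∨
    (code.dec (staleState U D) T fun j ↦ code.enc j (staleState U D) ![a, b]).getD default = b := by
  obtain ⟨m, -, hm⟩ := code.dec_correct (staleState U D) ![a, b] T hT
    ⟨0, by rwa [received_staleState_zero]⟩
  rw [hm, Option.getD_some]
  fin_cases m
  · exact .inl rfl
  · exact .inr rfl

theorem dec_staleState_empty {T : Finset (ZMod n)} (hU : cW ≤ #U) (hT : #T = cR)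
    (a b : Fin K → Bool) :
    (code.dec (staleState U ∅) T fun j ↦ code.enc j (staleState U ∅) ![a, b]).getD default =
      b := by
  have hone : cW ≤ #(received n 2 (staleState U ∅) 1) := by
    rwa [received_staleState_empty_one]
  obtain ⟨m, hle, hm⟩ := code.dec_correct (staleState U ∅) ![a, b] T hT ⟨1, hone⟩
  obtain rfl : m = 1 := le_antisymm (Fin.le_last m) (hle 1 hone)
  rw [hm]
  rfl

/-- What the servers of `P` store when the servers of `U` hold both versions `a` and `b`. -/
def freshSymbols (U P : Finset (ZMod n)) (a b : Fin K → Bool) (j : P) : Fin q :=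
  code.enc j (staleState U ∅) ![a, b]

/-- What the servers of `P` store when they hold only the old version `a`; the value put in place
of the new version is irrelevant. -/
def staleSymbols (U P : Finset (ZMod n)) (a : Fin K → Bool) (j : P) : Fin q :=
  code.enc j (staleState U P) ![a, a]

theorem freshSymbols_eq (hPD : Separated h P D) (a b : Fin K → Bool) (j : P) :
    code.freshSymbols U P a b j = code.enc j (staleState U D) ![a, b] :=
  code.enc_staleState_congr (fun i hi ↦ by simp [hPD j j.2 i hi]) _

theorem staleSymbols_eq (hPD : Separated h P D) (a b : Fin K → Bool) (j : P) :
    code.staleSymbols U P a j = code.enc j (staleState U (P ∪ D)) ![a, b] :=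
  (code.enc_staleState_congr (fun i hi ↦ by simp [hPD j j.2 i hi]) _).trans
    (code.enc_staleState_of_mem (mem_union_left D j.2) rfl)

/-- The cluster code of a multi-version code whose clusters are the pairwise distant sets of
servers `P₁`, `P₂`, `P₃`, where the servers of `U` receive the old version. -/
def toClusterCode (hU : cW ≤ #U) (hT : #(P₁ ∪ P₂ ∪ P₃ ∪ Uᶜ) = cR) (h₁₂ : Separated h P₁ P₂)
    (h₃₁ : Separated h P₃ P₁) (h₃₂ : Separated h P₃ P₂) :
    ClusterCode (Fin K → Bool) (P₁ → Fin q) (P₂ → Fin q) (P₃ → Fin q) where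
  old₁ := code.staleSymbols U P₁
  old₂ := code.staleSymbols U P₂
  new₁ := code.freshSymbols U P₁
  new₂ := code.freshSymbols U P₂
  new₃ := code.freshSymbols U P₃
  dec₀ := code.decodeStale U ∅
  dec₁ := code.decodeStale U P₁
  dec₂ := code.decodeStale U (P₁ ∪ P₂)
  dec₀_eq a b := by
    rw [code.decodeStale_eq (code.freshSymbols_eq separated_empty a b)
      (code.freshSymbols_eq separated_empty a b) (code.freshSymbols_eq separated_empty a b)]
    exact code.dec_staleState_empty hU hT a b
  dec₁_eq a b := by
    have hstale₁ := code.staleSymbols_eq (U := U) (P := P₁) separated_empty a b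
    rw [union_empty] at hstale₁
    rw [code.decodeStale_eq hstale₁ (code.freshSymbols_eq h₁₂.symm a b)
      (code.freshSymbols_eq h₃₁ a b)]
    exact code.dec_staleState_eq_or hU hT _ a b
  dec₂_eq a b := by
    have hstale₂ := code.staleSymbols_eq (U := U) h₁₂.symm a b
    rw [union_comm] at hstale₂
    rw [code.decodeStale_eq (code.staleSymbols_eq h₁₂ a b) hstale₂
      (code.freshSymbols_eq (h₃₁.union_right h₃₂) a b)]
    exact code.dec_staleState_eq_or hU hT _ a b

theorem exists_clusterCode (code : MVCode n cW cR 2 h K q) {s₁ s₂ s₃ : ℕ}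
    (hs : s₁ + s₂ + s₃ + n = cW + cR) (hcR : 2 * h + cR ≤ n) (hcW : h + cW ≤ n) :
    ∃ P₁ P₂ P₃ : Finset (ZMod n), #P₁ = s₁ ∧ #P₂ = s₂ ∧ #P₃ = s₃ ∧
      Nonempty (ClusterCode (Fin K → Bool) (P₁ → Fin q) (P₂ → Fin q) (P₃ → Fin q)) := by
  let U := arc n 0 cW
  let P₁ := arc n 0 s₁
  let P₂ := arc n (s₁ + h) (s₁ + h + s₂)
  let P₃ := arc n (cW - s₃) cW
  have hP₁ : #P₁ = s₁ := card_arc (by omega)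
  have hP₂ : #P₂ = s₂ := (card_arc (by omega)).trans (by omega)
  have hP₃ : #P₃ = s₃ := (card_arc (by omega)).trans (by omega)
  have hU : #U = cW := card_arc (by omega)
  have hT : #(P₁ ∪ P₂ ∪ P₃ ∪ Uᶜ) = cR := by
    rw [card_union_of_disjoint, card_union_of_disjoint, card_union_of_disjoint, card_compl,
      ZMod.card, hP₁, hP₂, hP₃, hU]
    · omega
    · exact disjoint_arc (by omega)
    · exact disjoint_union_left.2 ⟨disjoint_arc (by omega), disjoint_arc (by omega)⟩
    · exact disjoint_compl_right.mono_left <| union_subset (union_subset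
        (arc_subset_arc le_rfl (by omega)) (arc_subset_arc (by omega) (by omega)))
        (arc_subset_arc (by omega) le_rfl)
  exact ⟨P₁, P₂, P₃, hP₁, hP₂, hP₃, ⟨code.toClusterCode hU.ge hT
    (separated_arc (by omega) (by omega)) (separated_arc (by omega) (by omega)).symm
    (separated_arc (by omega) (by omega)).symm⟩⟩

theorem symbols_pos (code : MVCode n cW cR 2 h K q) : 0 < q := (code.enc 0 default default).pos

theorem two_pow_two_mul_le (code : MVCode n cW cR 2 h K q) {c : ℕ} (hc : c + n = cW + cR)
    (hc3 : 3 ≤ c) (hcR : 2 * h + cR ≤ n) (hcW : h + cW ≤ n) :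
    2 ^ (2 * K) ≤ q ^ ((4 * c + 2) / 3) := by
  obtain ⟨P₁, P₂, P₃, hP₁, hP₂, hP₃, ⟨C⟩⟩ := code.exists_clusterCode
    (s₁ := c / 3) (s₂ := c / 3) (s₃ := c / 3 + c % 3) (by omega) hcR hcW
  have hbound := C.two_pow_two_mul_le (K := K) code.symbols_pos (t := c / 3) (r := c % 3) (by omega)
    (Nat.mod_lt c three_pos) (by simp) (by simp [hP₁]) (by simp [hP₂]) (by simp [hP₃])
  rwa [show (4 * c + 2) / 3 = 4 * (c / 3) + (4 * (c % 3) + 2) / 3 by omega]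

end MVCode

theorem converse_impossibility_l_general {n cW cR h c K q : ℕ} [NeZero n]
    (hc : c + n = cW + cR) (hc3 : 3 ≤ c) (hcR : 2 * h + cR ≤ n) (hcW : h + cW ≤ n) (l : ℕ)
    (code : MVCode n cW cR 2 h K q) :
    2 ^ K ≤ q ^ (l + 1) ∨ 2 ^ (2 * K) ≤ q ^ (2 * c - l - 1) := by
  have hbound := code.two_pow_two_mul_le hc hc3 hcR hcW
  obtain hl | hl : (4 * c + 2) / 3 ≤ 2 * (l + 1) ∨ (4 * c + 2) / 3 ≤ 2 * c - l - 1 := by omega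
  · left
    rw [← Nat.pow_le_pow_iff_left two_ne_zero, ← pow_mul', ← pow_mul']
    exact hbound.trans (Nat.pow_le_pow_right code.symbols_pos hl)
  · exact .inr (hbound.trans (Nat.pow_le_pow_right code.symbols_pos hl))

/-- Theorem 4, intermediate bound: in the setting of Theorem 4
(`ν = 2`, `c_R = c_W`, `c := 2c_W - n ≥ 3`, `n ≥ ⌈7c/3⌉ + 4`, `(n-c)/4` an integer,
`h ≤ (n-c)/4`), for every integer `l` with `0 ≤ l ≤ c-1` and
`2c - l - 2 ≤ (n + 3c - 4)/4`, every `(n, c_W, c_W, 2, h, 2^K, q)` multi-version code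
with side information satisfies `q^(l+1) ≥ 2^K` or `q^(2c-l-1) ≥ 2^(2K)`, i.e.
`log₂ q ≥ min{K/(l+1), 2K/(2c-l-1)}`. -/
theorem converse_impossibility_l (n cW h c K q l : ℕ) [NeZero n]
    (hcWn : cW ≤ n) (hc : c + n = 2 * cW) (hc3 : 3 ≤ c)
    (hn : (7 * c + 2) / 3 + 4 ≤ n) (hdiv : 4 ∣ (n - c))
    (hh0 : 0 < h) (hh : h ≤ (n - c) / 4) (h2h : 2 * h + 1 ≤ n)
    (hK : 0 < K) (hq : 0 < q)
    (hl : l ≤ c - 1) (hl2 : 2 * c - l - 2 ≤ (n + 3 * c - 4) / 4)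
    (code : MVCode n cW cW 2 h K q) :
    2 ^ K ≤ q ^ (l + 1) ∨ 2 ^ (2 * K) ≤ q ^ (2 * c - l - 1) :=
  converse_impossibility_l_general (by omega) hc3 (by omega) (by omega) l code
end
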